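/- Let A be the backward shift on the complex space X. The spectral radius of A equals 1; i.e., lim_{n→∞} ‖Aⁿ‖^{1/n} = lim_{n→∞} (n+1)^{1/n} = 1, and consequently σ(A) = {λ ∈ ℂ : |λ| ≤ 1}. -/

import Mathlib

open Filter Topology

/-- Membership in the complex space `X` (0-based: `x k` is the paper's
`x_{k+1}`). -/
def MemXC (x : ℕ → ℂ) : Prop :=
  Summable (fun k : ℕ => ‖x (k + 1) / ((k : ℂ) + 2) - x k / ((k : ℂ) + 1)‖) ∧
  Tendsto (fun k : ℕ => x k / ((k : ℂ) + 1)) atTop (𝓝 0)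

/-! Dividing by the index identifies `X` with the null sequences of bounded variation, and taking
differences identifies those with `ℓ¹`, so `X` is a Banach space. In these terms `Aⁿ` shifts by `n`
and multiplies by the antitone weight `1 + n / (k + 1)`; Abel summation gives `‖Aⁿ‖ ≤ n + 1`, hence
`σ(A)` lies in the closed unit disk by Gelfand's formula. Conversely every `|λ| < 1` is an
eigenvalue, with eigenvector `(λᵏ)`, and the spectrum is closed. -/

section NullBV

variable {E : Type*} [SeminormedAddCommGroup E]

/-- Null sequences of bounded variation. -/
structure IsNullBV (w : ℕ → E) : Prop where
  summable_norm_sub : Summable fun k => ‖w (k + 1) - w k‖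
  tendsto_zero : Tendsto w atTop (𝓝 0)

/-- The total variation of a sequence; it is `0` by convention when the variation is infinite. -/
noncomputable def seqVariation (w : ℕ → E) : ℝ :=
  ∑' k, ‖w (k + 1) - w k‖

lemma seqVariation_nonneg (w : ℕ → E) : 0 ≤ seqVariation w :=
  tsum_nonneg fun _ => norm_nonneg _

namespace IsNullBV

variable {v w : ℕ → E}

lemma of_summable_norm (hw : Summable fun k => ‖w k‖) : IsNullBV w where
  summable_norm_sub :=
    .of_nonneg_of_le (fun _ => norm_nonneg _) (fun _ => norm_sub_le _ _)
      (((summable_nat_add_iff 1).2 hw).add hw)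
  tendsto_zero := tendsto_zero_iff_norm_tendsto_zero.2 hw.tendsto_atTop_zero

lemma add (hv : IsNullBV v) (hw : IsNullBV w) : IsNullBV (v + w) where
  summable_norm_sub := by
    refine .of_nonneg_of_le (fun _ => norm_nonneg _) (fun k => ?_)
      (hv.summable_norm_sub.add hw.summable_norm_sub)
    simpa only [Pi.add_apply, add_sub_add_comm] using norm_add_le _ _
  tendsto_zero := add_zero (0 : E) ▸ hv.tendsto_zero.add hw.tendsto_zero

lemma const_smul {𝕜 : Type*} [NormedField 𝕜] [NormedSpace 𝕜 E] (c : 𝕜) (hw : IsNullBV w) :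
    IsNullBV (c • w) where
  summable_norm_sub := by
    simpa only [Pi.smul_apply, ← smul_sub, norm_smul] using hw.summable_norm_sub.mul_left ‖c‖
  tendsto_zero := smul_zero c (A := E) ▸ hw.tendsto_zero.const_smul c

lemma nat_add (hw : IsNullBV w) (n : ℕ) : IsNullBV fun k => w (k + n) where
  summable_norm_sub := by
    simpa only [Nat.add_right_comm _ n 1] using (summable_nat_add_iff n).2 hw.summable_norm_sub
  tendsto_zero := hw.tendsto_zero.comp (tendsto_add_atTop_nat n)

lemma norm_zero_le_seqVariation (hw : IsNullBV w) : ‖w 0‖ ≤ seqVariation w := by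
  have hdist (k : ℕ) : dist (w k) (w k.succ) = ‖w (k + 1) - w k‖ := dist_eq_norm_sub' _ _
  simpa only [dist_zero_right, hdist, seqVariation] using
    dist_le_tsum_dist_of_tendsto₀ (by simpa only [hdist] using hw.summable_norm_sub) hw.tendsto_zero

lemma norm_le_seqVariation_nat_add (hw : IsNullBV w) (k : ℕ) :
    ‖w k‖ ≤ seqVariation fun j => w (j + k) := by
  simpa only [zero_add] using (hw.nat_add k).norm_zero_le_seqVariation

lemma sum_range_add_seqVariation_nat_add (hw : IsNullBV w) (n : ℕ) :
    ∑ k ∈ Finset.range n, ‖w (k + 1) - w k‖ + seqVariation (fun k => w (k + n)) =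
      seqVariation w := by
  simpa only [seqVariation, Nat.add_right_comm _ n 1] using
    hw.summable_norm_sub.sum_add_tsum_nat_add n

lemma seqVariation_nat_add_le (hw : IsNullBV w) (n : ℕ) :
    (seqVariation fun k => w (k + n)) ≤ seqVariation w := by
  have hsum : 0 ≤ ∑ k ∈ Finset.range n, ‖w (k + 1) - w k‖ :=
    Finset.sum_nonneg fun _ _ => norm_nonneg _
  linarith [hw.sum_range_add_seqVariation_nat_add n]

lemma seqVariation_nat_add_eq (hw : IsNullBV w) (k : ℕ) :
    (seqVariation fun j => w (j + k)) =
      ‖w (k + 1) - w k‖ + seqVariation fun j => w (j + (k + 1)) := by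
  have hsplit := (hw.nat_add k).sum_range_add_seqVariation_nat_add 1
  simp only [Finset.sum_range_one, zero_add, add_assoc, add_comm 1 k] at hsplit
  exact hsplit.symm

section AntitoneWeight

variable [NormedSpace ℝ E] {a : ℕ → ℝ}

lemma norm_smul_succ_sub_smul_le (hw : IsNullBV w) (ha : Antitone a) (ha₀ : 0 ≤ a) (k : ℕ) :
    ‖a (k + 1) • w (k + 1) - a k • w k‖ ≤
      a k * seqVariation (fun j => w (j + k)) -
        a (k + 1) * seqVariation (fun j => w (j + (k + 1))) := by
  have hstep : 0 ≤ a k - a (k + 1) := sub_nonneg.2 (ha k.le_succ)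
  calc ‖a (k + 1) • w (k + 1) - a k • w k‖
      = ‖a k • (w (k + 1) - w k) - (a k - a (k + 1)) • w (k + 1)‖ := by
        congr 1; module
    _ ≤ a k * ‖w (k + 1) - w k‖ + (a k - a (k + 1)) * ‖w (k + 1)‖ := by
        refine (norm_sub_le _ _).trans_eq ?_
        rw [norm_smul, norm_smul, Real.norm_of_nonneg (ha₀ k), Real.norm_of_nonneg hstep]
    _ ≤ a k * ‖w (k + 1) - w k‖ +
          (a k - a (k + 1)) * seqVariation (fun j => w (j + (k + 1))) := by
        gcongr
        exact hw.norm_le_seqVariation_nat_add (k + 1)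
    _ = _ := by rw [hw.seqVariation_nat_add_eq k]; ring

lemma sum_range_norm_smul_succ_sub_smul_le (hw : IsNullBV w) (ha : Antitone a) (ha₀ : 0 ≤ a)
    (n : ℕ) :
    ∑ k ∈ Finset.range n, ‖a (k + 1) • w (k + 1) - a k • w k‖ ≤ a 0 * seqVariation w := by
  have htelescope := (Finset.sum_le_sum fun k _ => hw.norm_smul_succ_sub_smul_le ha ha₀ k).trans_eq
    (Finset.sum_range_sub' (fun k => a k * seqVariation fun j => w (j + k)) n)
  exact htelescope.trans (sub_le_self _ (mul_nonneg (ha₀ n) (seqVariation_nonneg _)))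

lemma smul_of_antitone (hw : IsNullBV w) (ha : Antitone a) (ha₀ : 0 ≤ a) :
    IsNullBV fun k => a k • w k where
  summable_norm_sub := summable_of_sum_range_le (fun _ => norm_nonneg _)
    (hw.sum_range_norm_smul_succ_sub_smul_le ha ha₀)
  tendsto_zero := by
    refine squeeze_zero_norm (a := fun k => a 0 * ‖w k‖) (fun k => ?_) ?_
    · rw [norm_smul, Real.norm_of_nonneg (ha₀ k)]
      gcongr
      exact ha k.zero_le
    · simpa only [norm_zero, mul_zero] using hw.tendsto_zero.norm.const_mul (a 0)

lemma seqVariation_smul_le (hw : IsNullBV w) (ha : Antitone a) (ha₀ : 0 ≤ a) :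
    (seqVariation fun k => a k • w k) ≤ a 0 * seqVariation w :=
  Real.tsum_le_of_sum_range_le (fun _ => norm_nonneg _)
    (hw.sum_range_norm_smul_succ_sub_smul_le ha ha₀)

end AntitoneWeight

end IsNullBV

end NullBV

section TailSums

lemma tsum_nat_add_sub_tsum_nat_add_succ {G : Type*} [AddCommGroup G] [TopologicalSpace G]
    [IsTopologicalAddGroup G] [T2Space G] {d : ℕ → G} (hd : Summable d) (k : ℕ) :
    ∑' j, d (j + k) - ∑' j, d (j + (k + 1)) = d k := by
  rw [((summable_nat_add_iff k).2 hd).tsum_eq_zero_add]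
  simp only [zero_add, add_assoc, add_comm 1 k, add_sub_cancel_right]

lemma isNullBV_neg_tsum_nat_add {E : Type*} [NormedAddCommGroup E] [CompleteSpace E] {d : ℕ → E}
    (hd : Summable fun k => ‖d k‖) : IsNullBV fun k => -∑' j, d (j + k) where
  summable_norm_sub := by
    simpa only [neg_sub_neg, tsum_nat_add_sub_tsum_nat_add_succ hd.of_norm] using hd
  tendsto_zero := neg_zero (G := E) ▸ (tendsto_sum_nat_add d).neg

end TailSums

section Spectrum

lemma spectrum_subset_closedBall_of_norm_pow_le {B : Type*} [NormedRing B] [NormedAlgebra ℂ B]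
    [CompleteSpace B] {b : B} {u : ℕ → ℝ} {r : ℝ} (hb : ∀ n, ‖b ^ n‖ ≤ u n)
    (hu : Tendsto (fun n : ℕ => u n ^ (n : ℝ)⁻¹) atTop (𝓝 r)) :
    spectrum ℂ b ⊆ Metric.closedBall 0 r := by
  intro l hl
  have hradius : spectralRadius ℂ b ≤ ENNReal.ofReal r := by
    refine le_of_tendsto_of_tendsto' (spectrum.pow_norm_pow_one_div_tendsto_nhds_spectralRadius b)
      (ENNReal.tendsto_ofReal hu) fun n => ?_
    rw [one_div]
    gcongr
    exact hb n
  have hr : 0 ≤ r :=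
    ge_of_tendsto' hu fun n => Real.rpow_nonneg ((norm_nonneg _).trans (hb n)) _
  have hnorm : ENNReal.ofReal ‖l‖ ≤ ENNReal.ofReal r := by
    rw [ofReal_norm]
    exact le_trans (le_iSup₂ (f := fun z (_ : z ∈ spectrum ℂ b) => (‖z‖₊ : ENNReal)) l hl) hradius
  simpa only [mem_closedBall_zero_iff] using (ENNReal.ofReal_le_ofReal_iff hr).1 hnorm

lemma mem_spectrum_iff_not_bijective {𝕜 E : Type*} [NontriviallyNormedField 𝕜]
    [NormedAddCommGroup E] [NormedSpace 𝕜 E] [CompleteSpace E] (T : E →L[𝕜] E) (l : 𝕜) :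
    l ∈ spectrum 𝕜 T ↔ ¬ Function.Bijective fun x => T x - l • x := by
  rw [spectrum.mem_iff, IsUnit.sub_iff, ContinuousLinearMap.isUnit_iff_bijective]
  rfl

lemma tendsto_natCast_add_one_rpow_inv :
    Tendsto (fun n : ℕ => ((n : ℝ) + 1) ^ ((n : ℝ)⁻¹)) atTop (𝓝 1) := by
  have hsucc : Tendsto (fun n : ℕ => (n : ℝ) + 1) atTop atTop :=
    tendsto_atTop_add_const_right _ _ tendsto_natCast_atTop_atTop
  refine ((tendsto_rpow_div_mul_add 1 1 (-1) zero_ne_one).comp hsucc).congr fun n => ?_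
  simp only [Function.comp_apply, one_mul, add_neg_cancel_right, one_div]

end Spectrum

/-- The linear map `x ↦ (x k / (k + 1))`, i.e. `(x_k / k)` in the paper's 1-based indexing. -/
noncomputable def indexQuotient : (ℕ → ℂ) →ₗ[ℂ] ℕ → ℂ where
  toFun x k := x k / ((k : ℂ) + 1)
  map_add' _ _ := funext fun _ => add_div _ _ _
  map_smul' _ _ := funext fun _ => mul_div_assoc _ _ _

lemma indexQuotient_apply (x : ℕ → ℂ) (k : ℕ) : indexQuotient x k = x k / ((k : ℂ) + 1) := rfl

lemma indexQuotient_injective : Function.Injective indexQuotient := fun _ _ hxy =>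
  funext fun k => (div_left_inj' k.cast_add_one_ne_zero).1 (congrFun hxy k)

lemma indexQuotient_nat_add (x : ℕ → ℂ) (n : ℕ) :
    indexQuotient (fun k => x (k + n)) =
      fun k : ℕ => (1 + n / ((k : ℝ) + 1)) • indexQuotient x (k + n) := by
  funext k
  have hk : (k : ℂ) + 1 ≠ 0 := k.cast_add_one_ne_zero
  have hkn : (k : ℂ) + n + 1 ≠ 0 := mod_cast (k + n).succ_ne_zero
  simp only [indexQuotient_apply, Complex.real_smul]
  push_cast
  field_simp
  ring

lemma antitone_one_add_div (n : ℕ) : Antitone fun k : ℕ => 1 + (n : ℝ) / ((k : ℝ) + 1) :=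
  fun _ _ hij => by dsimp only; gcongr

lemma memXC_iff_isNullBV {x : ℕ → ℂ} : MemXC x ↔ IsNullBV (indexQuotient x) := by
  have hsucc (k : ℕ) : indexQuotient x (k + 1) = x (k + 1) / ((k : ℂ) + 2) := by
    rw [indexQuotient_apply, Nat.cast_add_one, add_assoc, one_add_one_eq_two]
  exact ⟨fun h => ⟨by simpa only [hsucc] using! h.1, h.2⟩,
    fun h => ⟨by simpa only [hsucc] using! h.summable_norm_sub, h.tendsto_zero⟩⟩

namespace MemXC

lemma nat_add {x : ℕ → ℂ} (hx : MemXC x) (n : ℕ) : MemXC fun k => x (k + n) := by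
  rw [memXC_iff_isNullBV, indexQuotient_nat_add]
  exact ((memXC_iff_isNullBV.1 hx).nat_add n).smul_of_antitone (antitone_one_add_div n)
    fun k => by positivity

lemma seqVariation_nat_add_le {x : ℕ → ℂ} (hx : MemXC x) (n : ℕ) :
    seqVariation (indexQuotient fun k => x (k + n)) ≤ (n + 1) * seqVariation (indexQuotient x) := by
  have hw := memXC_iff_isNullBV.1 hx
  rw [indexQuotient_nat_add]
  refine ((hw.nat_add n).seqVariation_smul_le (antitone_one_add_div n)
    fun k => by positivity).trans ?_
  rw [Nat.cast_zero, zero_add, div_one, add_comm]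
  gcongr
  exact hw.seqVariation_nat_add_le n

lemma pow_of_norm_lt_one {l : ℂ} (hl : ‖l‖ < 1) : MemXC fun k => l ^ k := by
  refine memXC_iff_isNullBV.2 (.of_summable_norm ?_)
  refine .of_nonneg_of_le (fun _ => norm_nonneg _) (fun k => ?_)
    (summable_geometric_of_lt_one (norm_nonneg l) hl)
  rw [indexQuotient_apply, norm_div, norm_pow, ← Nat.cast_add_one, Complex.norm_natCast]
  exact div_le_self (by positivity) (mod_cast k.succ_pos)

end MemXC

/-- The space `X` as a subspace of the space of all complex sequences. -/
def memXCSubmodule : Submodule ℂ (ℕ → ℂ) where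
  carrier := {x | MemXC x}
  zero_mem' := memXC_iff_isNullBV.2 <| map_zero indexQuotient ▸ .of_summable_norm (by simp)
  add_mem' hx hy := memXC_iff_isNullBV.2 <|
    map_add indexQuotient _ _ ▸ (memXC_iff_isNullBV.1 hx).add (memXC_iff_isNullBV.1 hy)
  smul_mem' c _ hx := memXC_iff_isNullBV.2 <|
    map_smul indexQuotient c _ ▸ (memXC_iff_isNullBV.1 hx).const_smul c

/-- The Banach space `X`, a copy of `memXCSubmodule` that carries the variation norm instead of the
topology of coordinatewise convergence. -/
def XC : Type := memXCSubmodule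

namespace XC

instance : AddCommGroup XC := inferInstanceAs (AddCommGroup memXCSubmodule)

instance : Module ℂ XC := inferInstanceAs (Module ℂ memXCSubmodule)

lemma isNullBV (x : XC) : IsNullBV (indexQuotient x.1) := memXC_iff_isNullBV.1 x.2

/-- The differences of `x k / (k + 1)`, which identify `X` with `ℓ¹`. -/
noncomputable def diff : XC →ₗ[ℂ] lp (fun _ : ℕ => ℂ) 1 where
  toFun x := ⟨fun k => indexQuotient x.1 (k + 1) - indexQuotient x.1 k,
    memℓp_gen (by simpa using x.isNullBV.summable_norm_sub)⟩
  map_add' x y := by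
    ext k
    exact (congrArg₂ (· - ·) (add_div _ _ _) (add_div _ _ _)).trans (add_sub_add_comm _ _ _ _)
  map_smul' c x := by
    ext k
    exact (congrArg₂ (· - ·) (mul_div_assoc _ _ _) (mul_div_assoc _ _ _)).trans (mul_sub _ _ _).symm

lemma norm_diff (x : XC) : ‖diff x‖ = seqVariation (indexQuotient x.1) := by
  simpa only [ENNReal.toReal_one, Real.rpow_one, div_one] using!
    lp.norm_eq_tsum_rpow (by norm_num) (diff x)

lemma diff_injective : Function.Injective diff := by
  refine (injective_iff_map_eq_zero diff).2 fun x hx => Subtype.ext (indexQuotient_injective ?_)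
  have hvar : seqVariation (indexQuotient x.1) = 0 := by rw [← norm_diff, hx, norm_zero]
  have hzero : indexQuotient x.1 = 0 := funext fun k => norm_le_zero_iff.1 <|
    (x.isNullBV.norm_le_seqVariation_nat_add k).trans <|
      (x.isNullBV.seqVariation_nat_add_le k).trans_eq hvar
  exact hzero.trans (map_zero indexQuotient).symm

lemma diff_surjective : Function.Surjective diff := by
  intro d
  have hd : Summable fun k => ‖d k‖ := by simpa using (lp.memℓp d).summable (by simp)
  let x : ℕ → ℂ := fun k => ((k : ℂ) + 1) * -∑' j, d (j + k)
  have hx : indexQuotient x = fun k => -∑' j, d (j + k) :=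
    funext fun k => mul_div_cancel_left₀ _ k.cast_add_one_ne_zero
  refine ⟨⟨x, memXC_iff_isNullBV.2 (hx ▸ isNullBV_neg_tsum_nat_add hd)⟩, ?_⟩
  ext k
  change indexQuotient x (k + 1) - indexQuotient x k = d k
  rw [hx, neg_sub_neg, tsum_nat_add_sub_tsum_nat_add_succ hd.of_norm]

noncomputable instance : NormedAddCommGroup XC :=
  NormedAddCommGroup.induced XC _ diff diff_injective

noncomputable instance : NormedSpace ℂ XC := NormedSpace.induced ℂ XC _ diff

lemma norm_eq (x : XC) : ‖x‖ = seqVariation (indexQuotient x.1) := norm_diff x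

instance : CompleteSpace XC :=
  (LinearIsometryEquiv.mk (.ofBijective diff ⟨diff_injective, diff_surjective⟩)
    fun _ => rfl).toIsometryEquiv.completeSpace

/-- The backward shift `A` on `X`. -/
noncomputable def backwardShift : XC →L[ℂ] XC :=
  LinearMap.mkContinuous
    { toFun x := ⟨fun k => x.1 (k + 1), x.2.nat_add 1⟩
      map_add' _ _ := rfl
      map_smul' _ _ := rfl }
    (1 + 1) fun x => by
      rw [norm_eq, norm_eq]
      simpa only [Nat.cast_one] using! MemXC.seqVariation_nat_add_le x.2 1

lemma backwardShift_apply (x : XC) (k : ℕ) : (backwardShift x).1 k = x.1 (k + 1) := rfl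

lemma backwardShift_pow_apply (n : ℕ) (x : XC) (k : ℕ) :
    ((backwardShift ^ n) x).1 k = x.1 (k + n) := by
  induction n generalizing k with
  | zero => rfl
  | succ n ih =>
    rw [pow_succ', mul_apply_eq_comp, backwardShift_apply, ih, Nat.add_right_comm,
      Nat.add_assoc]

lemma norm_backwardShift_pow_le (n : ℕ) : ‖backwardShift ^ n‖ ≤ n + 1 := by
  refine ContinuousLinearMap.opNorm_le_bound _ (by positivity) fun x => ?_
  rw [norm_eq, norm_eq, funext (backwardShift_pow_apply n x)]
  exact MemXC.seqVariation_nat_add_le x.2 n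

lemma mem_spectrum_backwardShift_of_norm_lt_one {l : ℂ} (hl : ‖l‖ < 1) :
    l ∈ spectrum ℂ backwardShift := by
  let x : XC := ⟨fun k => l ^ k, .pow_of_norm_lt_one hl⟩
  have heigen : backwardShift x = l • x := Subtype.ext (funext fun k => pow_succ' l k)
  have hx : x ≠ 0 := fun h => one_ne_zero (congrFun (congrArg Subtype.val h) 0)
  rw [ContinuousLinearMap.spectrum_eq]
  exact (Module.End.hasEigenvalue_of_hasEigenvector
    (Module.End.hasEigenvector_iff.2 ⟨Module.End.mem_eigenspace_iff.2 heigen, hx⟩)).mem_spectrum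

theorem spectrum_backwardShift : spectrum ℂ backwardShift = Metric.closedBall 0 1 := by
  refine (spectrum_subset_closedBall_of_norm_pow_le norm_backwardShift_pow_le
    tendsto_natCast_add_one_rpow_inv).antisymm ?_
  rw [← closure_ball (0 : ℂ) one_ne_zero]
  exact closure_minimal
    (fun l hl => mem_spectrum_backwardShift_of_norm_lt_one (mem_ball_zero_iff.1 hl))
    (spectrum.isClosed _)

lemma bijOn_iff_bijective_backwardShift_sub_smul (l : ℂ) :
    Set.BijOn (fun (x : ℕ → ℂ) => fun k => x (k + 1) - l * x k) {x | MemXC x} {x | MemXC x} ↔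
      Function.Bijective fun x : XC => backwardShift x - l • x := by
  have hmaps : Set.MapsTo (fun (x : ℕ → ℂ) => fun k => x (k + 1) - l * x k)
      {x | MemXC x} {x | MemXC x} := fun x hx =>
    let x : XC := ⟨x, hx⟩
    (backwardShift x - l • x).2
  rw [Set.BijOn, ← hmaps.restrict_inj, ← hmaps.restrict_surjective_iff, and_iff_right hmaps]
  rfl

end XC

/-- The spectral radius of the backward shift `A` on the complex space `X`
equals `1`: since `‖Aⁿ‖ = n + 1`, `‖Aⁿ‖^{1/n} = (n+1)^{1/n} → 1`; consequently
`σ(A)` is the closed unit disk: `λ ∈ σ(A)` (i.e., `A - λI` fails to be a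
bijection of `X` onto itself) iff `|λ| ≤ 1`. -/
theorem stmt_17 :
    Tendsto (fun n : ℕ => ((n : ℝ) + 1) ^ ((n : ℝ)⁻¹)) atTop (𝓝 1) ∧
    (∀ l : ℂ, ‖l‖ ≤ 1 ↔
      ¬ Set.BijOn (fun (x : ℕ → ℂ) => fun k => x (k + 1) - l * x k)
        {x | MemXC x} {x | MemXC x}) := by
  refine ⟨tendsto_natCast_add_one_rpow_inv, fun l => ?_⟩
  rw [XC.bijOn_iff_bijective_backwardShift_sub_smul, ← mem_spectrum_iff_not_bijective,
    XC.spectrum_backwardShift, mem_closedBall_zero_iff]
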